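/- Let G and H be finitely generated groups with finite generating sets X and Y, such that the growth function g_G^X(n) is bounded above by a polynomial in n, while g_H^Y(n) ≥ bⁿ for some real b > 1 and all sufficiently large n. Then for every polynomial t(n), 𝔏(H) is not contained in 𝔏(G)^w_{t(n)}: the word problem W(H,Y) belongs to 𝔏(H) but is not recognized by any weakly t(n) time-bounded G-automaton. -/

import Mathlib

/-- A `G`-automaton over input alphabet `α`: a nondeterministic finite automaton
equipped with a register holding an element of the group `G`. -/
structure GAutomaton (α : Type*) (G : Type*) [Group G] where
  /-- the (finite) state set -/
  Q : Type
  finQ : Finite Q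
  /-- the initial state -/
  q0 : Q
  /-- the accepting states -/
  acc : Set Q
  /-- the (finite) transition relation; `none` stands for ε -/
  δ : Set (Q × Option α × Q × G)
  finδ : δ.Finite

namespace GAutomaton

variable {α : Type*} {G : Type*} [Group G]

/-- One computation step between configurations `(state, register, remaining input)`. -/
def Step (M : GAutomaton α G) (c c' : M.Q × G × List α) : Prop :=
  ∃ σ m, (c.1, σ, c'.1, m) ∈ M.δ ∧ c'.2.1 = c.2.1 * m ∧
    match σ with
    | none => c'.2.2 = c.2.2
    | some s => c.2.2 = s :: c'.2.2

/-- `M.StepsIn k c c'` : configuration `c'` is reachable from `c` in exactly `k` steps. -/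
def StepsIn (M : GAutomaton α G) : ℕ → (M.Q × G × List α) → (M.Q × G × List α) → Prop
  | 0, c, c' => c = c'
  | n + 1, c, c' => ∃ d, M.Step c d ∧ M.StepsIn n d c'

/-- `M` accepts the word `w` within `t` computation steps. -/
def AcceptsIn (M : GAutomaton α G) (w : List α) (t : ℕ) : Prop :=
  ∃ k ≤ t, ∃ q ∈ M.acc, M.StepsIn k (M.q0, 1, w) (q, 1, [])

/-- The language recognized by `M`. -/
def lang (M : GAutomaton α G) : Language α := {w | ∃ t, M.AcceptsIn w t}

/-- `M` is real-time if every transition consumes an input symbol. -/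
def RealTime (M : GAutomaton α G) : Prop := ∀ tr ∈ M.δ, tr.2.1 ≠ none

end GAutomaton

/-- `L ∈ 𝔏(G)` : the language `L` is recognized by some `G`-automaton. -/
def GRecognizable (G : Type*) [Group G] {α : Type*} (L : Language α) : Prop :=
  ∃ M : GAutomaton α G, M.lang = L

/-- `L ∈ 𝔏(G)ʷ_{t(n)}` : `L` is recognized by a weakly `t(n)` time-bounded `G`-automaton. -/
def GRecognizableInTime (G : Type*) [Group G] {α : Type*} (L : Language α) (t : ℕ → ℕ) : Prop :=
  ∃ M : GAutomaton α G, M.lang = L ∧ ∀ w ∈ L, M.AcceptsIn w (t w.length)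

/-- `L ∈ 𝔏(G)ʷ_{O(n)}` : `L` is recognized by a weakly linear-time bounded `G`-automaton. -/
def GRecognizableLinTime (G : Type*) [Group G] {α : Type*} (L : Language α) : Prop :=
  ∃ C : ℕ, GRecognizableInTime G L (fun n => C * n + C)

/-- Evaluation in `G` of a word over the alphabet `X ∪ X⁻¹`, encoded as `↥X × Bool`
(`(x, false)` stands for the generator `x` and `(x, true)` for its inverse `x⁻¹`). -/
def wordEval {G : Type*} [Group G] (X : Finset G) (w : List (↥X × Bool)) : G :=
  (w.map fun p => if p.2 then (p.1 : G)⁻¹ else (p.1 : G)).prod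

/-- The word problem language `W(G,X)` over the alphabet `X ∪ X⁻¹`: all words whose
product in `G` is the identity. -/
def wordProblem {G : Type*} [Group G] (X : Finset G) : Language (↥X × Bool) :=
  {w | wordEval X w = 1}

/-- The growth function `g_G^X(n)` of `G` with respect to `X`: the number of group
elements of word length at most `n`. -/
noncomputable def growthFn {G : Type*} [Group G] (X : Finset G) (n : ℕ) : ℕ :=
  Nat.card {g : G // ∃ w : List (↥X × Bool), w.length ≤ n ∧ wordEval X w = g}

/-- The formal inverse of a word over `X ∪ X⁻¹`. -/
def invWord {G : Type*} {X : Finset G} (w : List (↥X × Bool)) : List (↥X × Bool) :=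
  (w.map fun p => (p.1, !p.2)).reverse

lemma length_invWord {G : Type*} {X : Finset G} (w : List (↥X × Bool)) : (invWord w).length = w.length := by
  simp [invWord]

section WordEval

variable {G : Type*} [Group G] (X : Finset G)

lemma wordEval_nil : wordEval X [] = 1 := by simp [wordEval]

lemma wordEval_cons (p : ↥X × Bool) (w : List (↥X × Bool)) :
    wordEval X (p :: w) = (if p.2 then (p.1 : G)⁻¹ else (p.1 : G)) * wordEval X w := by
  simp [wordEval]

lemma wordEval_append (u v : List (↥X × Bool)) :
    wordEval X (u ++ v) = wordEval X u * wordEval X v := by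
  simp [wordEval]

lemma wordEval_invWord (w : List (↥X × Bool)) :
    wordEval X (invWord w) = (wordEval X w)⁻¹ := by
  induction w with
  | nil => simp [invWord, wordEval]
  | cons p w ih =>
    have h : invWord (p :: w) = invWord w ++ [(p.1, !p.2)] := by simp [invWord]
    rw [h, wordEval_append, ih, wordEval_cons, wordEval_cons, wordEval_nil, mul_inv_rev]
    rcases p with ⟨x, _ | _⟩ <;> simp

lemma exists_wordEval_eq (hX : Subgroup.closure (X : Set G) = ⊤) (g : G) :
    ∃ w, wordEval X w = g := by
  have hg : g ∈ Subgroup.closure (X : Set G) := hX ▸ Subgroup.mem_top g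
  induction hg using Subgroup.closure_induction with
  | mem x hx => exact ⟨[(⟨x, hx⟩, false)], by simp [wordEval]⟩
  | one => exact ⟨[], wordEval_nil X⟩
  | mul x y _ _ hx hy =>
    obtain ⟨u, rfl⟩ := hx
    obtain ⟨v, rfl⟩ := hy
    exact ⟨u ++ v, wordEval_append X u v⟩
  | inv x _ hx =>
    obtain ⟨u, rfl⟩ := hx
    exact ⟨invWord u, wordEval_invWord X u⟩

lemma finite_ball (n : ℕ) :
    Finite {g : G // ∃ w : List (↥X × Bool), w.length ≤ n ∧ wordEval X w = g} :=
  ((List.finite_length_le (↥X × Bool) n).image (wordEval X)).to_subtype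

end WordEval

namespace GAutomaton

variable {α : Type*} {G : Type*} [Group G] (M : GAutomaton α G)

lemma StepsIn.trans {i j : ℕ} {a b c : M.Q × G × List α}
    (hab : M.StepsIn i a b) (hbc : M.StepsIn j b c) : M.StepsIn (i + j) a c := by
  induction i generalizing a with
  | zero =>
    obtain rfl : a = b := hab
    simpa using hbc
  | succ i ih =>
    obtain ⟨d, had, hdb⟩ := hab
    rw [Nat.add_right_comm]
    exact ⟨d, had, ih hdb⟩

/-- A computation on `u ++ v` passes through a configuration in which exactly `u` has been read,
and its first part is independent of the rest `v` of the input. -/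
lemma StepsIn.split {k : ℕ} {q q' : M.Q} {x y : G} {u v : List α}
    (h : M.StepsIn k (q, x, u ++ v) (q', y, [])) :
    ∃ i j r z, i + j = k ∧ (∀ rest, M.StepsIn i (q, x, u ++ rest) (r, z, rest)) ∧
      M.StepsIn j (r, z, v) (q', y, []) := by
  induction k generalizing q x u with
  | zero =>
    have h' : (q, x, u ++ v) = (q', y, []) := h
    simp only [Prod.mk.injEq, List.append_eq_nil_iff] at h'
    obtain ⟨rfl, rfl, rfl, rfl⟩ := h'
    exact ⟨0, 0, q, x, rfl, fun _ => rfl, rfl⟩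
  | succ k ih =>
    rcases u with _ | ⟨a, u⟩
    · exact ⟨0, k + 1, q, x, by omega, fun _ => rfl, h⟩
    obtain ⟨⟨q₁, x₁, w₁⟩, ⟨σ, m, hδ, hx, hw⟩, hrest⟩ := h
    rcases σ with _ | s
    · obtain rfl : w₁ = a :: u ++ v := hw
      obtain ⟨i, j, r, z, hij, hi, hj⟩ := ih hrest
      exact ⟨i + 1, j, r, z, by omega,
        fun rest => ⟨(q₁, x₁, a :: u ++ rest), ⟨none, m, hδ, hx, rfl⟩, hi rest⟩, hj⟩
    · have hw' : a :: (u ++ v) = s :: w₁ := hw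
      obtain ⟨rfl, rfl⟩ := List.cons.inj hw'
      obtain ⟨i, j, r, z, hij, hi, hj⟩ := ih hrest
      exact ⟨i + 1, j, r, z, by omega,
        fun rest => ⟨(q₁, x₁, u ++ rest), ⟨some a, m, hδ, hx, rfl⟩, hi rest⟩, hj⟩

/-- In `k` steps the register moves by a distance linear in `k`. -/
lemma exists_register_bound (X : Finset G) (hX : Subgroup.closure (X : Set G) = ⊤) :
    ∃ C : ℕ, ∀ k c c', M.StepsIn k c c' →
      ∃ w, w.length ≤ C * k ∧ c'.2.1 = c.2.1 * wordEval X w := by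
  choose word hword using exists_wordEval_eq X hX
  obtain ⟨C, hC⟩ := (M.finδ.image fun tr => (word tr.2.2.2).length).bddAbove
  refine ⟨C, fun k => ?_⟩
  induction k with
  | zero =>
    intro c c' h
    obtain rfl : c = c' := h
    exact ⟨[], by simp, by simp [wordEval_nil]⟩
  | succ k ih =>
    rintro c c' ⟨d, ⟨σ, m, hδ, hm, -⟩, hrest⟩
    obtain ⟨w, hw, hwe⟩ := ih d c' hrest
    refine ⟨word m ++ w, ?_, ?_⟩
    · have hlen : (word m).length ≤ C := hC ⟨_, hδ, rfl⟩
      rw [List.length_append, Nat.mul_succ]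
      omega
    · rw [hwe, hm, wordEval_append, hword, mul_assoc]

end GAutomaton

/-- The one-state automaton multiplying its register by each letter it reads. -/
def wordProblemAutomaton {H : Type*} [Group H] (Y : Finset H) : GAutomaton (↥Y × Bool) H where
  Q := Unit
  finQ := inferInstance
  q0 := ()
  acc := Set.univ
  δ := Set.range fun p : ↥Y × Bool => ((), some p, (), if p.2 then (p.1 : H)⁻¹ else (p.1 : H))
  finδ := Set.finite_range _

lemma wordProblemAutomaton_register_eq {H : Type*} [Group H] (Y : Finset H) {k : ℕ} {q q' : Unit}
    {x y : H} {w : List (↥Y × Bool)}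
    (h : (wordProblemAutomaton Y).StepsIn k (q, x, w) (q', y, [])) : y = x * wordEval Y w := by
  induction k generalizing q x w with
  | zero =>
    have h' : (q, x, w) = (q', y, []) := h
    simp only [Prod.mk.injEq] at h'
    obtain ⟨-, rfl, rfl⟩ := h'
    simp [wordEval_nil]
  | succ k ih =>
    obtain ⟨⟨q₁, x₁, w₁⟩, ⟨σ, m, ⟨p, hp⟩, hx, hw⟩, hrest⟩ := h
    cases hp
    have hw' : w = p :: w₁ := hw
    have hx' : x₁ = x * (if p.2 then (p.1 : H)⁻¹ else (p.1 : H)) := hx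
    rw [ih hrest, hw', hx', wordEval_cons, mul_assoc]

lemma wordProblemAutomaton_stepsIn {H : Type*} [Group H] (Y : Finset H) (x : H)
    (w : List (↥Y × Bool)) :
    (wordProblemAutomaton Y).StepsIn w.length ((), x, w) ((), x * wordEval Y w, []) := by
  induction w generalizing x with
  | nil => simp [GAutomaton.StepsIn, wordEval_nil]
  | cons p w ih =>
    refine ⟨((), x * (if p.2 then (p.1 : H)⁻¹ else (p.1 : H)), w),
      ⟨some p, _, ⟨p, rfl⟩, rfl, rfl⟩, ?_⟩
    rw [wordEval_cons, ← mul_assoc]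
    exact ih _

lemma gRecognizable_wordProblem {H : Type*} [Group H] (Y : Finset H) :
    GRecognizable H (wordProblem Y) := by
  refine ⟨wordProblemAutomaton Y, Set.ext fun w => ⟨?_, fun hw => ?_⟩⟩
  · rintro ⟨_, k, -, q, -, h⟩
    have h1 := wordProblemAutomaton_register_eq Y h
    rw [one_mul] at h1
    exact h1.symm
  · have h := wordProblemAutomaton_stepsIn Y 1 w
    have hw' : wordEval Y w = 1 := hw
    rw [hw', one_mul] at h
    exact ⟨w.length, w.length, le_rfl, (), trivial, h⟩

/-- Words of length at most `n` representing distinct elements of `H` must lead a `G`-automaton for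
the word problem of `H` to distinct pairs of state and register. -/
lemma growthFn_le_of_recognizes_wordProblem {G : Type*} [Group G] (X : Finset G)
    (hX : Subgroup.closure (X : Set G) = ⊤) {H : Type*} [Group H] (Y : Finset H)
    (M : GAutomaton (↥Y × Bool) G) (hM : M.lang = wordProblem Y) (t : ℕ → ℕ) (ht : Monotone t)
    (hacc : ∀ w ∈ wordProblem Y, M.AcceptsIn w (t w.length)) :
    ∃ C : ℕ, ∀ n, growthFn Y n ≤ Nat.card M.Q * growthFn X (C * t (2 * n)) := by
  obtain ⟨C, hC⟩ := M.exists_register_bound X hX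
  refine ⟨C, fun n => ?_⟩
  have key : ∀ h : {g : H // ∃ w : List (↥Y × Bool), w.length ≤ n ∧ wordEval Y w = g},
      ∃ c : M.Q × {g : G // ∃ w : List (↥X × Bool),
          w.length ≤ C * t (2 * n) ∧ wordEval X w = g},
        ∃ u v, wordEval Y u = h ∧ wordEval Y v = (h : H)⁻¹ ∧
          (∃ i, ∀ rest, M.StepsIn i (M.q0, 1, u ++ rest) (c.1, c.2, rest)) ∧
          ∃ j, ∃ q ∈ M.acc, M.StepsIn j (c.1, c.2, v) (q, 1, []) := by
    rintro ⟨_, u, hu, rfl⟩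
    have hmem : u ++ invWord u ∈ wordProblem Y := by
      change wordEval Y _ = 1
      rw [wordEval_append, wordEval_invWord, mul_inv_cancel]
    obtain ⟨k, hk, q, hq, hsteps⟩ := hacc _ hmem
    obtain ⟨i, j, r, z, hij, hi, hj⟩ := hsteps.split
    obtain ⟨w, hw, hz⟩ := hC _ _ _ (hi [])
    have hlen : (u ++ invWord u).length ≤ 2 * n := by
      rw [List.length_append, length_invWord]
      omega
    have hit : i ≤ t (2 * n) := (by omega : i ≤ k).trans (hk.trans (ht hlen))
    refine ⟨(r, ⟨z, w, hw.trans (Nat.mul_le_mul_left C hit), ?_⟩), u, invWord u, rfl,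
      wordEval_invWord Y u, ⟨i, hi⟩, j, q, hq, hj⟩
    simpa using hz.symm
  choose f u v hu hv hi hj using key
  have hf : Function.Injective f := by
    intro a b hab
    obtain ⟨i, hi⟩ := hi a
    obtain ⟨j, q, hq, hj⟩ := hj b
    rw [← hab] at hj
    have hlang : u a ++ v b ∈ M.lang :=
      ⟨i + j, i + j, le_rfl, q, hq, (hi (v b)).trans M hj⟩
    rw [hM] at hlang
    have heval : wordEval Y (u a ++ v b) = 1 := hlang
    rw [wordEval_append, hu, hv, mul_inv_eq_one] at heval
    exact Subtype.ext heval
  have := M.finQ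
  have := finite_ball X (C * t (2 * n))
  calc growthFn Y n ≤ _ := Nat.card_le_card_of_injective f hf
    _ = _ := Nat.card_prod _ _

lemma Polynomial.monotone_eval_nat (p : Polynomial ℕ) : Monotone fun n : ℕ => p.eval n := by
  intro m n hmn
  simp only [Polynomial.eval_eq_sum_range]
  gcongr

open Filter in
lemma Polynomial.eventually_eval_lt_pow (p : Polynomial ℕ) {b : ℝ} (hb : 1 < b) :
    ∀ᶠ n : ℕ in atTop, ((p.eval n : ℕ) : ℝ) < b ^ n := by
  have ho : (fun n : ℕ => ((p.eval n : ℕ) : ℝ)) =o[atTop] fun n : ℕ => b ^ n := by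
    simp only [Polynomial.eval_eq_sum_range, Nat.cast_sum, Nat.cast_mul, Nat.cast_pow]
    refine Asymptotics.IsLittleO.fun_sum fun i _ => ?_
    exact (isLittleO_pow_const_const_pow_of_one_lt i hb).const_mul_left _
  filter_upwards [ho.def (by norm_num : (0 : ℝ) < 1 / 2)] with n hn
  have hpos : 0 < b ^ n := by positivity
  rw [Real.norm_of_nonneg (Nat.cast_nonneg _), Real.norm_of_nonneg hpos.le] at hn
  linarith

open Filter in
/-- If `G` has polynomially bounded growth and `H` has (at least)
exponential growth, then for every polynomial `t`, the word problem `W(H,Y)` belongs to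
`𝔏(H)` but is not recognized by any weakly `t(n)` time-bounded `G`-automaton; in
particular `𝔏(H) ⊄ 𝔏(G)ʷ_{t(n)}`. -/
theorem poly_growth_cannot_simulate_exp_growth
    {G : Type*} [Group G] (X : Finset G) (hX : Subgroup.closure (X : Set G) = ⊤)
    {H : Type*} [Group H] (Y : Finset H) (hY : Subgroup.closure (Y : Set H) = ⊤)
    (hpoly : ∃ p : Polynomial ℕ, ∀ n, growthFn X n ≤ p.eval n)
    (hexp : ∃ b : ℝ, 1 < b ∧ ∀ᶠ n : ℕ in atTop, b ^ n ≤ (growthFn Y n : ℝ))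
    (t : Polynomial ℕ) :
    GRecognizable H (wordProblem Y) ∧
    ¬ GRecognizableInTime G (wordProblem Y) (fun n => t.eval n) := by
  refine ⟨gRecognizable_wordProblem Y, ?_⟩
  rintro ⟨M, hM, hacc⟩
  obtain ⟨p, hp⟩ := hpoly
  obtain ⟨b, hb, hgrowth⟩ := hexp
  obtain ⟨C, hC⟩ := growthFn_le_of_recognizes_wordProblem X hX Y M hM _ t.monotone_eval_nat hacc
  let P : Polynomial ℕ := Polynomial.C (Nat.card M.Q) *
    p.comp (Polynomial.C C * t.comp (Polynomial.C 2 * Polynomial.X))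
  obtain ⟨n, hn, hlt⟩ := (hgrowth.and (P.eventually_eval_lt_pow hb)).exists
  have hle : growthFn Y n ≤ P.eval n := by
    simpa [P] using (hC n).trans (Nat.mul_le_mul_left _ (hp _))
  have hle' : (growthFn Y n : ℝ) ≤ (P.eval n : ℕ) := by exact_mod_cast hle
  linarith
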